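/- Let η > 0 and t > 0, and let K_η(t,·) be the OST kernel. Then there exists a constant C_η > 0 depending only on η such that for all x ∈ ℝ, |∂_x K_η(t,x)| ≤ C_η (e^{6ηt}/t^{2/3}) · 1/(1+|x|³). -/

import Mathlib

open MeasureTheory

noncomputable def ostSymbol (η t ξ : ℝ) : ℂ :=
  Complex.exp (Complex.I * ((ξ ^ 3 * t : ℝ) : ℂ) - ((η * t * (|ξ| ^ 3 - |ξ|) : ℝ) : ℂ))

noncomputable def ostKernel (η t x : ℝ) : ℂ :=
  ∫ ξ : ℝ, Complex.exp (2 * Real.pi * Complex.I * ((x * ξ : ℝ) : ℂ)) * ostSymbol η t ξ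

open Set Filter Topology Polynomial

/-- The modulus of the symbol on the positive half-line. -/
noncomputable def ostDecay (η t ξ : ℝ) : ℝ :=
  Real.exp (-(η * t * (ξ ^ 3 - ξ)))

lemma ostDecay_nonneg (η t ξ : ℝ) : 0 ≤ ostDecay η t ξ := (Real.exp_pos _).le

lemma continuous_ostDecay (η t : ℝ) : Continuous (ostDecay η t) := by
  unfold ostDecay; fun_prop

lemma ostDecay_le {η t ξ : ℝ} (hη : 0 < η) (ht : 0 < t) (hξ : 0 ≤ ξ) :
    ostDecay η t ξ ≤ Real.exp (η * t) * Real.exp (-(η * t / 2) * ξ ^ (3 : ℝ)) := by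
  rw [ostDecay, ← Real.exp_add, Real.exp_le_exp, show (3 : ℝ) = ((3 : ℕ) : ℝ) by norm_num,
    Real.rpow_natCast]
  have h : ξ ≤ 1 + ξ ^ 3 / 2 := by
    nlinarith [mul_nonneg hξ (sq_nonneg (ξ - 1)), sq_nonneg (ξ - 1)]
  nlinarith [mul_le_mul_of_nonneg_left h (mul_pos hη ht).le]

lemma integrableOn_pow_mul_exp_neg_cube {b : ℝ} (hb : 0 < b) (k : ℕ) :
    IntegrableOn (fun ξ : ℝ => ξ ^ k * Real.exp (-b * ξ ^ (3 : ℝ))) (Ioi 0) := by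
  have hk : (-1 : ℝ) < k := by linarith [k.cast_nonneg (α := ℝ)]
  simpa only [Real.rpow_natCast] using
    integrableOn_rpow_mul_exp_neg_mul_rpow hk (by norm_num : (0 : ℝ) < 3) hb

lemma integrableOn_pow_mul_ostDecay {η t : ℝ} (hη : 0 < η) (ht : 0 < t) (k : ℕ) :
    IntegrableOn (fun ξ : ℝ => ξ ^ k * ostDecay η t ξ) (Ioi 0) := by
  have hb : 0 < η * t / 2 := by positivity
  refine Integrable.mono' ((integrableOn_pow_mul_exp_neg_cube hb k).const_mul (Real.exp (η * t)))
    ((continuous_id.pow k).mul (continuous_ostDecay η t)).aestronglyMeasurable ?_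
  filter_upwards [ae_restrict_mem measurableSet_Ioi] with ξ hξ
  have hξ : 0 < ξ := hξ
  rw [Real.norm_of_nonneg (mul_nonneg (by simpa using pow_nonneg hξ.le k) (ostDecay_nonneg _ _ _))]
  have := mul_le_mul_of_nonneg_left (ostDecay_le hη ht hξ.le) (pow_nonneg hξ.le k)
  linarith

/-- The moments of the symbol on the positive half-line. -/
noncomputable def ostMoment (η t : ℝ) (k : ℕ) : ℝ :=
  ∫ ξ in Ioi (0 : ℝ), ξ ^ k * ostDecay η t ξ

lemma ostMoment_le {η t : ℝ} (hη : 0 < η) (ht : 0 < t) (k : ℕ) :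
    ostMoment η t k ≤ Real.exp (η * t) *
      ((η * t / 2) ^ (-((k : ℝ) + 1) / 3) * (1 / 3) * Real.Gamma (((k : ℝ) + 1) / 3)) := by
  have hb : 0 < η * t / 2 := by positivity
  have hk : (-1 : ℝ) < k := by linarith [k.cast_nonneg (α := ℝ)]
  rw [← integral_rpow_mul_exp_neg_mul_rpow (by norm_num : (0 : ℝ) < 3) hk hb,
    ← integral_const_mul]
  refine setIntegral_mono_on (integrableOn_pow_mul_ostDecay hη ht k) ?_ measurableSet_Ioi ?_
  · simp only [Real.rpow_natCast]
    exact (integrableOn_pow_mul_exp_neg_cube hb k).const_mul (Real.exp (η * t))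
  · intro ξ hξ
    have hξ : 0 < ξ := hξ
    have := mul_le_mul_of_nonneg_left (ostDecay_le hη ht hξ.le) (pow_nonneg hξ.le k)
    rw [Real.rpow_natCast]
    linarith

/-- A power of `t` is dominated by an exponential times `t ^ (-2/3)`. -/
lemma exists_rpow_le_exp_div {η r : ℝ} (hη : 0 < η) (hr : -(2 / 3) ≤ r) :
    ∃ C : ℝ, 0 ≤ C ∧ ∀ t : ℝ, 0 < t →
      t ^ r ≤ C * (Real.exp (5 * η * t) / t ^ ((2 : ℝ) / 3)) := by
  obtain ⟨N, hN⟩ := exists_nat_ge (r + 2 / 3)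
  refine ⟨1 + N.factorial / (5 * η) ^ N, by positivity, fun t ht => ?_⟩
  have h1 : t ^ (r + 2 / 3) ≤ 1 + t ^ N := by
    rcases le_total t 1 with h | h
    · have := Real.rpow_le_one ht.le h (by linarith : 0 ≤ r + 2 / 3)
      have := pow_pos ht N
      linarith
    · have := Real.rpow_le_rpow_of_exponent_le h hN
      rw [Real.rpow_natCast] at this
      linarith
  have h2 : t ^ N ≤ N.factorial / (5 * η) ^ N * Real.exp (5 * η * t) := by
    have := Real.pow_div_factorial_le_exp (5 * η * t) (by positivity) N
    rw [div_le_iff₀ (by positivity), mul_pow] at this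
    rw [div_mul_eq_mul_div, le_div_iff₀ (by positivity)]
    linarith
  have h3 : 1 ≤ Real.exp (5 * η * t) := Real.one_le_exp (by positivity)
  rw [← mul_div_assoc, le_div_iff₀ (by positivity), ← Real.rpow_add ht]
  linarith

lemma exists_pow_mul_ostMoment_le {η : ℝ} (hη : 0 < η) {m k : ℕ} (hk : k ≤ 3 * m + 1) :
    ∃ C : ℝ, 0 ≤ C ∧ ∀ t : ℝ, 0 < t →
      t ^ m * ostMoment η t k ≤ C * (Real.exp (6 * η * t) / t ^ ((2 : ℝ) / 3)) := by
  have hr : -(2 / 3) ≤ (m : ℝ) + -((k : ℝ) + 1) / 3 := by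
    have : (k : ℝ) ≤ 3 * m + 1 := by exact_mod_cast hk
    linarith
  obtain ⟨C, hC, h⟩ := exists_rpow_le_exp_div hη hr
  have hΓ : 0 < Real.Gamma (((k : ℝ) + 1) / 3) := Real.Gamma_pos_of_pos (by positivity)
  set B : ℝ := (η / 2) ^ (-((k : ℝ) + 1) / 3) * (1 / 3) * Real.Gamma (((k : ℝ) + 1) / 3)
  have hB : 0 ≤ B := by positivity
  refine ⟨B * C, by positivity, fun t ht => ?_⟩
  calc t ^ m * ostMoment η t k
      ≤ t ^ m * (Real.exp (η * t) * ((η * t / 2) ^ (-((k : ℝ) + 1) / 3) * (1 / 3) *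
          Real.Gamma (((k : ℝ) + 1) / 3))) := by gcongr; exact ostMoment_le hη ht k
    _ = B * Real.exp (η * t) * t ^ ((m : ℝ) + -((k : ℝ) + 1) / 3) := by
        rw [Real.rpow_add ht, Real.rpow_natCast, mul_div_right_comm,
          Real.mul_rpow (by positivity) ht.le]
        ring
    _ ≤ B * Real.exp (η * t) * (C * (Real.exp (5 * η * t) / t ^ ((2 : ℝ) / 3))) := by
        gcongr; exact h t ht
    _ = B * C * (Real.exp (6 * η * t) / t ^ ((2 : ℝ) / 3)) := by
        rw [show 6 * η * t = η * t + 5 * η * t by ring, Real.exp_add]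
        ring

/-- The oscillating symbol on the positive half-line. -/
noncomputable def ostWave (η t ω ξ : ℝ) : ℂ :=
  Complex.exp (Complex.I * ω * ξ + (Complex.I - η) * t * (ξ : ℂ) ^ 3 + η * t * ξ)

lemma norm_ostWave (η t ω ξ : ℝ) : ‖ostWave η t ω ξ‖ = ostDecay η t ξ := by
  rw [ostWave, ostDecay, Complex.norm_exp]
  congr 1
  simp [← Complex.ofReal_pow]
  ring

lemma continuous_ostWave (η t ω : ℝ) : Continuous (ostWave η t ω) := by
  unfold ostWave; fun_prop

lemma integrableOn_eval_mul_ostWave {η t : ℝ} (hη : 0 < η) (ht : 0 < t) (ω : ℝ) (q : ℂ[X]) :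
    IntegrableOn (fun ξ : ℝ => q.eval (ξ : ℂ) * ostWave η t ω ξ) (Ioi 0) := by
  induction q using Polynomial.induction_on' with
  | add p q hp hq =>
    simp only [eval_add, add_mul]
    exact hp.add hq
  | monomial k a =>
    refine Integrable.mono' ((integrableOn_pow_mul_ostDecay hη ht k).const_mul ‖a‖) ?_ ?_
    · have := continuous_ostWave η t ω
      simp only [eval_monomial]
      exact Continuous.aestronglyMeasurable (by fun_prop)
    · filter_upwards [ae_restrict_mem measurableSet_Ioi] with ξ hξ
      rw [eval_monomial, norm_mul, norm_mul, norm_pow, Complex.norm_real, norm_ostWave,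
        Real.norm_of_nonneg (le_of_lt hξ), mul_assoc]

lemma hasDerivAt_eval_mul_ostWave (η t ω : ℝ) (q : ℂ[X]) (ξ : ℝ) :
    HasDerivAt (fun ξ : ℝ => q.eval (ξ : ℂ) * ostWave η t ω ξ)
      ((derivative q + (C (Complex.I * ω) + C (3 * (Complex.I - η) * t) * X ^ 2 + C (η * t : ℂ)) * q
        ).eval (ξ : ℂ) * ostWave η t ω ξ) ξ := by
  have hphase : HasDerivAt (fun z : ℂ => Complex.I * ω * z + (Complex.I - η) * t * z ^ 3 + η * t * z)
      (Complex.I * ω + 3 * (Complex.I - η) * t * (ξ : ℂ) ^ 2 + η * t) (ξ : ℂ) := by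
    refine HasDerivAt.congr_deriv
      ((((hasDerivAt_id' (ξ : ℂ)).const_mul (Complex.I * ω)).add
        ((hasDerivAt_pow 3 (ξ : ℂ)).const_mul ((Complex.I - η) * t))).add
        ((hasDerivAt_id' (ξ : ℂ)).const_mul ((η : ℂ) * t))) ?_
    push_cast
    ring
  refine ((q.hasDerivAt _).mul hphase.cexp).comp_ofReal.congr_deriv ?_
  simp only [eval_add, eval_mul, eval_C, eval_pow, eval_X, ostWave]
  ring

/-- The polynomial factor of the third derivative of `ξ` times the symbol. -/
noncomputable def ostThird (η t : ℝ) : ℂ[X] :=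
  let P : ℂ[X] := C (3 * (Complex.I - η) * t) * X ^ 2 + C (η * t : ℂ)
  C 3 * (C (6 * (Complex.I - η) * t) * X + P ^ 2) +
    X * (C (6 * (Complex.I - η) * t) + C (18 * (Complex.I - η) * t) * X * P + P ^ 3)

/-- Three integrations by parts on the positive half-line. -/
lemma integral_mul_ostWave {η t ω : ℝ} (hη : 0 < η) (ht : 0 < t) (hω : ω ≠ 0) :
    (∫ ξ in Ioi (0 : ℝ), (ξ : ℂ) * ostWave η t ω ξ) + 1 / (ω : ℂ) ^ 2 =
      -(Complex.I * ω)⁻¹ ^ 3 * (2 * η * t +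
        ∫ ξ in Ioi (0 : ℝ), (ostThird η t).eval (ξ : ℂ) * ostWave η t ω ξ) := by
  set c : ℂ := Complex.I * ω with hc
  have hω' : (ω : ℂ) ≠ 0 := by exact_mod_cast hω
  have hc0 : c ≠ 0 := mul_ne_zero Complex.I_ne_zero hω'
  set P : ℂ[X] := C (3 * (Complex.I - η) * t) * X ^ 2 + C (η * t : ℂ) with hP
  set Q : ℂ[X] := C (c⁻¹) * X - C (c⁻¹ ^ 2) * (1 + X * P) +
    C (c⁻¹ ^ 3) * (2 * P + X * (C (6 * (Complex.I - η) * t) * X + P ^ 2)) with hQ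
  set R : ℂ[X] := X + C (c⁻¹ ^ 3) * ostThird η t with hR
  have hderiv : ∀ ξ : ℝ, HasDerivAt (fun ξ : ℝ => Q.eval (ξ : ℂ) * ostWave η t ω ξ)
      (R.eval (ξ : ℂ) * ostWave η t ω ξ) ξ := by
    intro ξ
    convert hasDerivAt_eval_mul_ostWave η t ω Q ξ using 2
    rw [← hc, hQ, hR, ostThird, hP]
    simp only [eval_add, eval_mul, eval_C, eval_pow, eval_X, eval_sub, eval_one, eval_ofNat,
      derivative_add, derivative_sub, derivative_mul, derivative_C, derivative_X, derivative_pow,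
      derivative_one, derivative_ofNat, eval_zero]
    simp
    field_simp
    ring
  have hi := integrableOn_eval_mul_ostWave hη ht ω
  have hlim := tendsto_zero_of_hasDerivAt_of_integrableOn_Ioi (fun ξ _ => hderiv ξ) (hi R) (hi Q)
  have key := integral_Ioi_of_hasDerivAt_of_tendsto' (a := 0) (fun ξ _ => hderiv ξ) (hi R) hlim
  have hX := hi X
  simp only [eval_X] at hX
  have hsplit : ∫ ξ in Ioi (0 : ℝ), R.eval (ξ : ℂ) * ostWave η t ω ξ =
      (∫ ξ in Ioi (0 : ℝ), (ξ : ℂ) * ostWave η t ω ξ) +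
        c⁻¹ ^ 3 * ∫ ξ in Ioi (0 : ℝ), (ostThird η t).eval (ξ : ℂ) * ostWave η t ω ξ := by
    rw [← integral_const_mul, ← integral_add hX ((hi (ostThird η t)).const_mul _)]
    congr 1 with ξ
    rw [hR]
    simp only [eval_add, eval_mul, eval_C, eval_X]
    ring
  rw [hsplit] at key
  have hQ0 : Q.eval ((0 : ℝ) : ℂ) * ostWave η t ω 0 = -c⁻¹ ^ 2 + c⁻¹ ^ 3 * (2 * η * t) := by
    simp only [hQ, hP, ostWave, eval_add, eval_sub, eval_mul, eval_C, eval_pow, eval_X, eval_one,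
      eval_ofNat, Complex.ofReal_zero]
    simp
    ring_nf
    simp
  rw [hQ0] at key
  have hc2 : c⁻¹ ^ 2 = -(1 / (ω : ℂ) ^ 2) := by
    rw [hc, mul_inv, mul_pow, Complex.inv_I]
    simp
  linear_combination key + hc2

lemma norm_eval_ostThird_le {η t ξ : ℝ} (hη : 0 < η) (ht : 0 < t) (hξ : 0 < ξ) :
    ‖(ostThird η t).eval (ξ : ℂ)‖ ≤ 162 * (1 + η) ^ 3 *
      (t * ξ + t ^ 2 + t ^ 2 * ξ ^ 4 + t ^ 3 * ξ + t ^ 3 * ξ ^ 7) := by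
  set A := 1 + η with hA
  have hA1 : 1 ≤ A := by linarith
  set s : ℂ := Complex.I - η with hs
  have hsA : ‖s‖ ≤ A := by
    refine (norm_sub_le _ _).trans ?_
    simp [abs_of_pos hη, hA]
  set p : ℂ := 3 * s * t * (ξ : ℂ) ^ 2 + η * t with hp
  have nt : ‖(t : ℂ)‖ = t := by rw [Complex.norm_real, Real.norm_of_nonneg ht.le]
  have nξ : ‖(ξ : ℂ)‖ = ξ := by rw [Complex.norm_real, Real.norm_of_nonneg hξ.le]
  have nη : ‖(η : ℂ)‖ = η := by rw [Complex.norm_real, Real.norm_of_nonneg hη.le]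
  have hpA : ‖p‖ ≤ 3 * A * t * (1 + ξ ^ 2) := by
    calc ‖p‖ ≤ 3 * ‖s‖ * t * ξ ^ 2 + η * t := by
          refine (norm_add_le _ _).trans (le_of_eq ?_)
          simp [abs_of_pos ht, abs_of_pos hξ, abs_of_pos hη]
      _ ≤ 3 * A * t * ξ ^ 2 + 3 * A * t := by gcongr; linarith
      _ = _ := by ring
  have heval : (ostThird η t).eval (ξ : ℂ) = 3 * (6 * s * t * ξ + p ^ 2) +
      ξ * (6 * s * t + 18 * s * t * ξ * p + p ^ 3) := by
    simp [ostThird, hp, hs]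
  have h4 : (1 + ξ ^ 2) ^ 2 ≤ 2 * (1 + ξ ^ 4) := by nlinarith [sq_nonneg (ξ ^ 2 - 1)]
  have h4' : ξ ^ 2 * (1 + ξ ^ 2) ≤ 2 * (1 + ξ ^ 4) := by nlinarith [sq_nonneg (ξ ^ 2 - 1)]
  have h6 : (1 + ξ ^ 2) ^ 3 ≤ 4 * (1 + ξ ^ 6) := by
    nlinarith [mul_nonneg (sq_nonneg (ξ ^ 2 - 1)) (by positivity : 0 ≤ 1 + ξ ^ 2)]
  have hA2 : A ≤ A ^ 3 := le_self_pow₀ hA1 (by norm_num)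
  have hA3 : A ^ 2 ≤ A ^ 3 := pow_le_pow_right₀ hA1 (by norm_num)
  calc ‖(ostThird η t).eval (ξ : ℂ)‖
      ≤ 3 * (6 * ‖s‖ * t * ξ + ‖p‖ ^ 2) +
          ξ * (6 * ‖s‖ * t + 18 * ‖s‖ * t * ξ * ‖p‖ + ‖p‖ ^ 3) := by
        rw [heval]
        refine (norm_add_le _ _).trans (add_le_add ?_ ?_)
        · rw [norm_mul, Complex.norm_ofNat]
          gcongr
          refine (norm_add_le _ _).trans (le_of_eq ?_)
          simp only [norm_mul, norm_pow, nt, nξ, Complex.norm_ofNat]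
        · rw [norm_mul, nξ]
          gcongr
          refine (norm_add₃_le).trans (le_of_eq ?_)
          simp only [norm_mul, norm_pow, nt, nξ, Complex.norm_ofNat]
    _ ≤ 3 * (6 * A * t * ξ + (3 * A * t * (1 + ξ ^ 2)) ^ 2) +
          ξ * (6 * A * t + 18 * A * t * ξ * (3 * A * t * (1 + ξ ^ 2)) +
            (3 * A * t * (1 + ξ ^ 2)) ^ 3) := by gcongr
    _ = 24 * A * (t * ξ) + 27 * A ^ 2 * t ^ 2 * (1 + ξ ^ 2) ^ 2 +
          54 * A ^ 2 * t ^ 2 * (ξ ^ 2 * (1 + ξ ^ 2)) +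
          27 * A ^ 3 * t ^ 3 * ξ * (1 + ξ ^ 2) ^ 3 := by ring
    _ ≤ 24 * A ^ 3 * (t * ξ) + 27 * A ^ 3 * t ^ 2 * (2 * (1 + ξ ^ 4)) +
          54 * A ^ 3 * t ^ 2 * (2 * (1 + ξ ^ 4)) +
          27 * A ^ 3 * t ^ 3 * ξ * (4 * (1 + ξ ^ 6)) := by gcongr
    _ ≤ _ := by
        have e1 : 0 ≤ A ^ 3 * (t * ξ) := by positivity
        have e2 : 0 ≤ A ^ 3 * (t ^ 3 * ξ) := by positivity
        have e3 : 0 ≤ A ^ 3 * (t ^ 3 * ξ ^ 7) := by positivity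
        linarith

lemma norm_integral_ostThird_le {η t : ℝ} (hη : 0 < η) (ht : 0 < t) (ω : ℝ) :
    ‖∫ ξ in Ioi (0 : ℝ), (ostThird η t).eval (ξ : ℂ) * ostWave η t ω ξ‖ ≤
      162 * (1 + η) ^ 3 * (t ^ 1 * ostMoment η t 1 + t ^ 2 * ostMoment η t 0 +
        t ^ 2 * ostMoment η t 4 + t ^ 3 * ostMoment η t 1 + t ^ 3 * ostMoment η t 7) := by
  have hi := integrableOn_pow_mul_ostDecay hη ht
  have i1 := (hi 1).const_mul (t ^ 1)
  have i2 := (hi 0).const_mul (t ^ 2)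
  have i3 := (hi 4).const_mul (t ^ 2)
  have i4 := (hi 1).const_mul (t ^ 3)
  have i5 := (hi 7).const_mul (t ^ 3)
  simp only [ostMoment]
  rw [← integral_const_mul (t ^ 1), ← integral_const_mul (t ^ 2), ← integral_const_mul (t ^ 2),
    ← integral_const_mul (t ^ 3), ← integral_const_mul (t ^ 3), ← integral_add' i1 i2,
    ← integral_add' (i1.add i2) i3, ← integral_add' ((i1.add i2).add i3) i4,
    ← integral_add' (((i1.add i2).add i3).add i4) i5, ← integral_const_mul]
  refine norm_integral_le_of_norm_le (((((i1.add i2).add i3).add i4).add i5).const_mul _) ?_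
  filter_upwards [ae_restrict_mem measurableSet_Ioi] with ξ hξ
  rw [norm_mul, norm_ostWave]
  refine (mul_le_mul_of_nonneg_right (norm_eval_ostThird_le hη ht hξ)
    (ostDecay_nonneg _ _ _)).trans (le_of_eq ?_)
  simp only [Pi.add_apply]
  ring

lemma norm_integral_mul_ostWave_le {η t : ℝ} (ω : ℝ) :
    ‖∫ ξ in Ioi (0 : ℝ), (ξ : ℂ) * ostWave η t ω ξ‖ ≤ ostMoment η t 1 := by
  refine (norm_integral_le_integral_norm _).trans (le_of_eq ?_)
  refine setIntegral_congr_fun measurableSet_Ioi fun ξ hξ => ?_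
  simp only [norm_mul, norm_ostWave, Complex.norm_real, Real.norm_of_nonneg (le_of_lt hξ), pow_one]

lemma integrable_comp_abs_of_integrableOn_Ioi {f : ℝ → ℝ} (hf : IntegrableOn f (Ioi 0)) :
    Integrable fun x => f |x| := by
  have hpos : IntegrableOn (fun x => f |x|) (Ioi 0) :=
    hf.congr_fun (fun x hx => by simp only [abs_of_pos (mem_Ioi.1 hx)]) measurableSet_Ioi
  have hneg : IntegrableOn (fun x => f |x|) (Iic 0) := by
    rw [← Measure.map_neg_eq_self (volume : Measure ℝ)]
    have m : MeasurableEmbedding fun x : ℝ => -x := (Homeomorph.neg ℝ).measurableEmbedding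
    rw [m.integrableOn_map_iff]
    simp_rw [Function.comp_def, abs_neg, neg_preimage, neg_Iic, neg_zero]
    exact (integrableOn_Ici_iff_integrableOn_Ioi).2 hpos
  rw [← integrableOn_univ, ← Iic_union_Ioi (a := (0 : ℝ))]
  exact hneg.union hpos

/-- The integrand of the kernel. -/
noncomputable def ostIntegrand (η t x ξ : ℝ) : ℂ :=
  Complex.exp (2 * Real.pi * Complex.I * ((x * ξ : ℝ) : ℂ)) * ostSymbol η t ξ

lemma continuous_ostIntegrand (η t x : ℝ) : Continuous (ostIntegrand η t x) := by
  unfold ostIntegrand ostSymbol; fun_prop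

lemma norm_ostIntegrand (η t x ξ : ℝ) : ‖ostIntegrand η t x ξ‖ = ostDecay η t |ξ| := by
  rw [ostIntegrand, ostSymbol, norm_mul, Complex.norm_exp, Complex.norm_exp, ostDecay,
    ← Real.exp_add]
  congr 1
  simp [-Complex.ofReal_pow]

lemma ostIntegrand_eq_ostWave {η t x ξ : ℝ} (hξ : 0 < ξ) :
    ostIntegrand η t x ξ = ostWave η t (2 * Real.pi * x) ξ := by
  rw [ostIntegrand, ostSymbol, ostWave, abs_of_pos hξ, ← Complex.exp_add]
  congr 1
  push_cast
  ring

lemma ostIntegrand_neg (η t x ξ : ℝ) :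
    ostIntegrand η t x (-ξ) = (starRingEnd ℂ) (ostIntegrand η t x ξ) := by
  rw [ostIntegrand, ostIntegrand, ostSymbol, ostSymbol, abs_neg, map_mul, ← Complex.exp_conj,
    ← Complex.exp_conj, ← Complex.exp_add, ← Complex.exp_add]
  congr 1
  simp only [map_mul, map_sub, Complex.conj_I, Complex.conj_ofReal, map_ofNat]
  push_cast
  ring

lemma hasDerivAt_ostKernel {η t : ℝ} (hη : 0 < η) (ht : 0 < t) (x : ℝ) :
    Integrable (fun ξ : ℝ => 2 * Real.pi * Complex.I * ξ * ostIntegrand η t x ξ) ∧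
    HasDerivAt (fun x : ℝ => ostKernel η t x)
      (∫ ξ : ℝ, 2 * Real.pi * Complex.I * ξ * ostIntegrand η t x ξ) x := by
  have h0 := integrable_comp_abs_of_integrableOn_Ioi (integrableOn_pow_mul_ostDecay hη ht 0)
  have h1 := integrable_comp_abs_of_integrableOn_Ioi (integrableOn_pow_mul_ostDecay hη ht 1)
  refine hasDerivAt_integral_of_dominated_loc_of_deriv_le (𝕜 := ℝ) (s := univ)
    (F := fun x ξ => ostIntegrand η t x ξ)
    (F' := fun x ξ => 2 * Real.pi * Complex.I * ξ * ostIntegrand η t x ξ)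
    (bound := fun ξ => 2 * Real.pi * (|ξ| ^ 1 * ostDecay η t |ξ|)) univ_mem ?_ ?_ ?_ ?_
    (h1.const_mul _) ?_
  · exact Eventually.of_forall fun x => (continuous_ostIntegrand η t x).aestronglyMeasurable
  · refine h0.mono' (continuous_ostIntegrand η t x).aestronglyMeasurable ?_
    exact Eventually.of_forall fun ξ => by rw [norm_ostIntegrand]; simp
  · have := continuous_ostIntegrand η t x
    exact Continuous.aestronglyMeasurable (by fun_prop)
  · refine Eventually.of_forall fun ξ y _ => le_of_eq ?_
    rw [norm_mul, norm_ostIntegrand]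
    simp [abs_of_pos Real.pi_pos]
    ring
  · refine Eventually.of_forall fun ξ y _ => ?_
    have h : HasDerivAt (fun z : ℂ => 2 * Real.pi * Complex.I * (z * ξ))
        (2 * Real.pi * Complex.I * ξ) (y : ℂ) := by
      simpa using ((hasDerivAt_id' (y : ℂ)).mul_const (ξ : ℂ)).const_mul (2 * Real.pi * Complex.I)
    have h2 := (h.cexp.comp_ofReal).mul_const (ostSymbol η t ξ)
    simp only [ostIntegrand]
    push_cast
    refine h2.congr_deriv ?_
    ring

/-- The derivative of the kernel in terms of a half-line integral and its conjugate. -/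
lemma deriv_ostKernel {η t : ℝ} (hη : 0 < η) (ht : 0 < t) (x : ℝ) :
    deriv (fun x : ℝ => ostKernel η t x) x =
      2 * Real.pi * Complex.I * (∫ ξ in Ioi (0 : ℝ), (ξ : ℂ) * ostWave η t (2 * Real.pi * x) ξ) +
      (starRingEnd ℂ) (2 * Real.pi * Complex.I *
        ∫ ξ in Ioi (0 : ℝ), (ξ : ℂ) * ostWave η t (2 * Real.pi * x) ξ) := by
  obtain ⟨hi, hd⟩ := hasDerivAt_ostKernel hη ht x
  have hpos : ∫ ξ in Ioi (0 : ℝ), 2 * Real.pi * Complex.I * ξ * ostIntegrand η t x ξ =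
      2 * Real.pi * Complex.I *
        ∫ ξ in Ioi (0 : ℝ), (ξ : ℂ) * ostWave η t (2 * Real.pi * x) ξ := by
    rw [← integral_const_mul]
    refine setIntegral_congr_fun measurableSet_Ioi fun ξ hξ => ?_
    simp only [ostIntegrand_eq_ostWave (mem_Ioi.1 hξ)]
    ring
  have hneg : ∫ ξ in Iic (0 : ℝ), 2 * Real.pi * Complex.I * ξ * ostIntegrand η t x ξ =
      (starRingEnd ℂ) (∫ ξ in Ioi (0 : ℝ), 2 * Real.pi * Complex.I * ξ * ostIntegrand η t x ξ) := by
    have h := integral_comp_neg_Ioi (0 : ℝ)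
      fun ξ : ℝ => 2 * Real.pi * Complex.I * ξ * ostIntegrand η t x ξ
    rw [neg_zero] at h
    rw [← h, ← integral_conj]
    congr 1 with ξ
    rw [ostIntegrand_neg]
    simp only [map_mul, Complex.conj_I, Complex.conj_ofReal, map_ofNat]
    push_cast
    ring
  rw [hd.deriv, ← intervalIntegral.integral_Iic_add_Ioi hi.integrableOn hi.integrableOn, hneg, hpos,
    add_comm]

lemma norm_deriv_ostKernel_le {η t : ℝ} (hη : 0 < η) (ht : 0 < t) (x : ℝ) :
    ‖deriv (fun x : ℝ => ostKernel η t x) x‖ ≤ 4 * Real.pi * ostMoment η t 1 := by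
  rw [deriv_ostKernel hη ht]
  refine (norm_add_le _ _).trans ?_
  rw [RCLike.norm_conj, norm_mul]
  have h := norm_integral_mul_ostWave_le (η := η) (t := t) (2 * Real.pi * x)
  have h2 : ‖2 * Real.pi * Complex.I‖ = 2 * Real.pi := by simp [abs_of_pos Real.pi_pos]
  rw [h2]
  nlinarith [Real.pi_pos]

lemma norm_deriv_ostKernel_mul_cube_le {η t : ℝ} (hη : 0 < η) (ht : 0 < t) (x : ℝ) :
    ‖deriv (fun x : ℝ => ostKernel η t x) x‖ * |x| ^ 3 ≤ 4 * Real.pi * (2 * η * t +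
      162 * (1 + η) ^ 3 * (t ^ 1 * ostMoment η t 1 + t ^ 2 * ostMoment η t 0 +
        t ^ 2 * ostMoment η t 4 + t ^ 3 * ostMoment η t 1 + t ^ 3 * ostMoment η t 7)) := by
  have hT := norm_integral_ostThird_le hη ht (2 * Real.pi * x)
  have hpi := Real.pi_gt_three
  rcases eq_or_ne x 0 with rfl | hx
  · rw [abs_zero, zero_pow (by norm_num), mul_zero]
    have := (norm_nonneg _).trans hT
    positivity
  have hω : 2 * Real.pi * x ≠ 0 := by positivity
  have hJ := integral_mul_ostWave hη ht hω
  rw [deriv_ostKernel hη ht]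
  set J := ∫ ξ in Ioi (0 : ℝ), (ξ : ℂ) * ostWave η t (2 * Real.pi * x) ξ
  set T := ∫ ξ in Ioi (0 : ℝ), (ostThird η t).eval (ξ : ℂ) * ostWave η t (2 * Real.pi * x) ξ
  set M := 162 * (1 + η) ^ 3 * (t ^ 1 * ostMoment η t 1 + t ^ 2 * ostMoment η t 0 +
        t ^ 2 * ostMoment η t 4 + t ^ 3 * ostMoment η t 1 + t ^ 3 * ostMoment η t 7)
  set S : ℂ := J + 1 / ((2 * Real.pi * x : ℝ) : ℂ) ^ 2 with hS
  have hcancel : 2 * Real.pi * Complex.I * J + (starRingEnd ℂ) (2 * Real.pi * Complex.I * J) =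
      2 * Real.pi * Complex.I * S + (starRingEnd ℂ) (2 * Real.pi * Complex.I * S) := by
    simp only [hS, map_mul, map_add, map_div₀, map_pow, map_one, map_ofNat, Complex.conj_I,
      Complex.conj_ofReal]
    ring
  have hSn : ‖S‖ * |x| ^ 3 ≤ 2 * η * t + M := by
    have h1 : ‖S‖ * (2 * Real.pi * |x|) ^ 3 = ‖2 * η * t + T‖ := by
      rw [hJ, norm_mul, norm_neg, norm_pow, norm_inv, norm_mul, Complex.norm_I, Complex.norm_real,
        Real.norm_eq_abs, abs_mul, abs_of_pos (by positivity : 0 < 2 * Real.pi)]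
      have : 0 < |x| := abs_pos.2 hx
      field_simp
    have h2 : ‖2 * η * t + T‖ ≤ 2 * η * t + M := by
      refine (norm_add_le _ _).trans (add_le_add (le_of_eq ?_) hT)
      simp [abs_of_pos hη, abs_of_pos ht]
    have h3 : ‖S‖ * |x| ^ 3 ≤ ‖S‖ * (2 * Real.pi * |x|) ^ 3 := by
      gcongr
      nlinarith [abs_nonneg x]
    linarith
  have h2 : ‖2 * Real.pi * Complex.I‖ = 2 * Real.pi := by simp [abs_of_pos Real.pi_pos]
  have hfin : ‖2 * Real.pi * Complex.I * J + (starRingEnd ℂ) (2 * Real.pi * Complex.I * J)‖ ≤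
      4 * Real.pi * ‖S‖ := by
    rw [hcancel]
    refine (norm_add_le _ _).trans (le_of_eq ?_)
    rw [RCLike.norm_conj, norm_mul, h2]
    ring
  calc _ ≤ 4 * Real.pi * ‖S‖ * |x| ^ 3 := by gcongr
    _ = 4 * Real.pi * (‖S‖ * |x| ^ 3) := by ring
    _ ≤ _ := by gcongr

theorem stmt13 : ∀ η : ℝ, 0 < η → ∃ C > (0:ℝ), ∀ t : ℝ, 0 < t →
    ∀ x : ℝ, ‖deriv (fun x : ℝ => ostKernel η t x) x‖ ≤
      C * (Real.exp (6 * η * t) / t ^ ((2:ℝ)/3)) * (1 / (1 + |x| ^ 3)) := by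
  intro η hη
  obtain ⟨C0, hC0, b0⟩ := exists_pow_mul_ostMoment_le hη (m := 0) (k := 1) (by norm_num)
  obtain ⟨C1, hC1, b1⟩ := exists_pow_mul_ostMoment_le hη (m := 1) (k := 1) (by norm_num)
  obtain ⟨C2, hC2, b2⟩ := exists_pow_mul_ostMoment_le hη (m := 2) (k := 0) (by norm_num)
  obtain ⟨C3, hC3, b3⟩ := exists_pow_mul_ostMoment_le hη (m := 2) (k := 4) (by norm_num)
  obtain ⟨C4, hC4, b4⟩ := exists_pow_mul_ostMoment_le hη (m := 3) (k := 1) (by norm_num)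
  obtain ⟨C5, hC5, b5⟩ := exists_pow_mul_ostMoment_le hη (m := 3) (k := 7) (by norm_num)
  obtain ⟨C6, hC6, b6⟩ := exists_rpow_le_exp_div (r := 1) hη (by norm_num)
  refine ⟨1 + 4 * Real.pi * (C0 + 2 * η * C6 +
    162 * (1 + η) ^ 3 * (C1 + C2 + C3 + C4 + C5)), by positivity, fun t ht x => ?_⟩
  set D := Real.exp (6 * η * t) / t ^ ((2 : ℝ) / 3) with hD
  have hD0 : 0 ≤ D := by positivity
  have b6' : t ≤ C6 * D := by
    refine (Real.rpow_one t).symm.le.trans ((b6 t ht).trans ?_)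
    rw [hD]
    gcongr
    norm_num
  have b0' := b0 t ht
  rw [pow_zero, one_mul] at b0'
  rw [mul_one_div, le_div_iff₀ (by positivity), mul_add, mul_one]
  calc _ ≤ 4 * Real.pi * ostMoment η t 1 + 4 * Real.pi * (2 * η * t +
      162 * (1 + η) ^ 3 * (t ^ 1 * ostMoment η t 1 + t ^ 2 * ostMoment η t 0 +
        t ^ 2 * ostMoment η t 4 + t ^ 3 * ostMoment η t 1 + t ^ 3 * ostMoment η t 7)) :=
        add_le_add (norm_deriv_ostKernel_le hη ht x) (norm_deriv_ostKernel_mul_cube_le hη ht x)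
    _ ≤ 4 * Real.pi * (C0 * D) + 4 * Real.pi * (2 * η * (C6 * D) +
      162 * (1 + η) ^ 3 * (C1 * D + C2 * D + C3 * D + C4 * D + C5 * D)) := by
        have hπ : 0 ≤ 4 * Real.pi := by positivity
        have hsum := add_le_add (add_le_add (add_le_add (add_le_add (b1 t ht) (b2 t ht)) (b3 t ht))
          (b4 t ht)) (b5 t ht)
        have hmoments := mul_le_mul_of_nonneg_left hsum (by positivity : 0 ≤ 162 * (1 + η) ^ 3)
        have hlin := mul_le_mul_of_nonneg_left b6' (by positivity : 0 ≤ 2 * η)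
        exact add_le_add (mul_le_mul_of_nonneg_left b0' hπ)
          (mul_le_mul_of_nonneg_left (add_le_add hlin hmoments) hπ)
    _ ≤ _ := by linarith
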